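/- arXiv:0908.0778 — 2 statements merged into one kernel-verified Lean document; each statement's English description precedes it below -/
import Mathlib

section
/- Let V be a C⁵ perturbed quartic potential with ℓ ∈ {−1,1} equal to the sign of V⁽⁴⁾(0), and let T(v) be its period map. Then there exist v₀ > 0 and C > 0 such that for all 0 < |v| < v₀: |T(v) − 2π + (3π/4)ℓv²| ≤ C|v|³. -/
open Real Filter Asymptotics Topology

/-- `V` is a C⁵ perturbed quartic potential `V(x) = x²/2 + ℓx⁴/4 + f(x)` with
`ℓ ∈ {-1,1}` (equal to the sign of `V⁽⁴⁾(0)`) and `|f⁽ⁱ⁾(x)| = O(|x|^{5-i})` as `x → 0`. -/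
def PerturbedQuartic (V f : ℝ → ℝ) (l : ℝ) : Prop :=
  (l = 1 ∨ l = -1) ∧ ContDiff ℝ 5 f ∧
  (∀ x : ℝ, V x = x ^ 2 / 2 + l * x ^ 4 / 4 + f x) ∧
  (∀ i : ℕ, i ≤ 5 → (iteratedDeriv i f) =O[𝓝 0] fun x : ℝ => |x| ^ (5 - i))

/-!
In the coordinate `g = √(2V)` the potential is harmonic, so half a period starting from `b > 0` is
`2 ∫₀ᵇ dx / √(g(b)² - g(x)²)`, whose kernel the substitution `g(x) = g(b) sin θ` turns into `dθ`.
The expansion `V = x²/2 + ℓx⁴/4 + O(x⁵)` gives `g' (1 - (3/4)ℓg²) = 1 + O(x³)`. Inserting the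
factor on the left costs `O(b³)` and leaves
`2 ∫₀^{π/2} (1 - (3/4)ℓ g(b)² sin² θ) dθ = π - (3π/8)ℓ g(b)²`. The turning points of speed `v`
satisfy `g(b)² = v²`, and the left half of an orbit is the right half of an orbit for `V(-x)`.
-/

section

open Set MeasureTheory intervalIntegral

theorem isBigO_pow_succ_of_deriv {E : Type*} [NormedAddCommGroup E] [NormedSpace ℝ E]
    {f : ℝ → E} {x₀ : ℝ} {n : ℕ} (hf : ∀ᶠ x in 𝓝 x₀, DifferentiableAt ℝ f x)
    (hf' : deriv f =O[𝓝 x₀] fun x => (x - x₀) ^ n) :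
    (fun x => f x - f x₀) =O[𝓝 x₀] fun x => (x - x₀) ^ (n + 1) := by
  obtain ⟨C, hC, hbound⟩ := hf'.exists_nonneg
  obtain ⟨r, hr, hball⟩ := Metric.eventually_nhds_iff_ball.1 (hf.and hbound.bound)
  refine .of_bound C ?_
  filter_upwards [Metric.ball_mem_nhds x₀ hr] with x hx
  have hseg : segment ℝ x₀ x ⊆ Metric.ball x₀ r :=
    (convex_ball x₀ r).segment_subset (Metric.mem_ball_self hr) hx
  have hderiv : ∀ y ∈ segment ℝ x₀ x, ‖deriv f y‖ ≤ C * ‖x - x₀‖ ^ n := fun y hy => by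
    refine (hball y (hseg hy)).2.trans ?_
    rw [norm_pow]
    gcongr
    exact norm_sub_le_of_mem_segment hy
  calc ‖f x - f x₀‖ ≤ C * ‖x - x₀‖ ^ n * ‖x - x₀‖ :=
        (convex_segment x₀ x).norm_image_sub_le_of_norm_deriv_le
          (fun y hy => (hball y (hseg hy)).1) hderiv (left_mem_segment ℝ x₀ x)
          (right_mem_segment ℝ x₀ x)
    _ = C * ‖(x - x₀) ^ (n + 1)‖ := by rw [norm_pow, pow_succ, mul_assoc]

theorem eventually_nhdsNE_zero_iff {p : ℝ → Prop} :
    (∀ᶠ x in 𝓝[≠] 0, p x) ↔ ∃ r > 0, ∀ x, 0 < |x| → |x| < r → p x := by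
  simp only [eventually_nhdsWithin_iff, Metric.eventually_nhds_iff, dist_zero_right, norm_eq_abs,
    mem_compl_singleton_iff, abs_pos]
  exact exists_congr fun r => and_congr_right fun _ => forall_congr' fun x => forall_comm

theorem exists_forall_abs_le_of_isBigO_pow {F : ℝ → ℝ} {n : ℕ}
    (hF : F =O[𝓝[≠] 0] fun x => x ^ n) :
    ∃ r > 0, ∃ C > 0, ∀ x, 0 < |x| → |x| < r → |F x| ≤ C * |x| ^ n := by
  obtain ⟨C, hC, hbound⟩ := hF.exists_pos
  obtain ⟨r, hr, h⟩ := eventually_nhdsNE_zero_iff.1 hbound.bound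
  exact ⟨r, hr, C, hC, fun x hx hxr => by simpa using h x hx hxr⟩

theorem eventually_forall_Ioc_of_eventually_nhdsGT {α : Type*} [LinearOrder α] [NoMaxOrder α]
    [TopologicalSpace α] [OrderTopology α] {a : α} {p : α → Prop} (h : ∀ᶠ x in 𝓝[>] a, p x) :
    ∀ᶠ b in 𝓝[>] a, ∀ x ∈ Ioc a b, p x := by
  obtain ⟨u, hu, hsub⟩ := mem_nhdsGT_iff_exists_Ioo_subset.1 h
  filter_upwards [Ioo_mem_nhdsGT hu] with b hb x hx
  exact hsub ⟨hx.1, hx.2.trans_lt hb.2⟩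

theorem abs_sqrt_sub_le_div (y : ℝ) {q : ℝ} (hq : 0 < q) : |√y - q| ≤ |y - q ^ 2| / q := by
  rw [le_div_iff₀ hq]
  rcases le_total 0 y with hy | hy
  · calc |√y - q| * q ≤ |√y - q| * (√y + q) := by gcongr; linarith [sqrt_nonneg y]
      _ = |(√y - q) * (√y + q)| := by
        rw [abs_mul, abs_of_nonneg (add_nonneg (sqrt_nonneg y) hq.le)]
      _ = |y - q ^ 2| := by rw [← sq_sqrt hy, sq_sub_sq, mul_comm, sq_sqrt hy]
  · rw [sqrt_eq_zero_of_nonpos hy, zero_sub, abs_neg, abs_of_pos hq, abs_sub_comm]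
    exact (by nlinarith : q * q ≤ q ^ 2 - y).trans (le_abs_self _)

section SineSubstitution

variable {a : ℝ} {p : ℝ → ℝ}

theorem cos_pos_of_mem_Ioo_zero {θ : ℝ} (hθ : θ ∈ Ioo 0 (π / 2)) : 0 < cos θ :=
  cos_pos_of_mem_Ioo ⟨(neg_neg_of_pos pi_div_two_pos).trans hθ.1, hθ.2⟩

theorem mul_cos_mul_inv_sqrt_sq_sub_sq {θ : ℝ} (ha : 0 < a) (hθ : θ ∈ Ioo 0 (π / 2)) :
    a * cos θ * (√(a ^ 2 - (a * sin θ) ^ 2))⁻¹ = 1 := by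
  have hcos : 0 < cos θ := cos_pos_of_mem_Ioo_zero hθ
  have hsq : a ^ 2 - (a * sin θ) ^ 2 = (a * cos θ) ^ 2 := by
    linear_combination -a ^ 2 * sin_sq_add_cos_sq θ
  rw [hsq, sqrt_sq (by positivity), mul_inv_cancel₀ (by positivity)]

theorem integral_mul_inv_sqrt_sq_sub_sq (ha : 0 < a) (p : ℝ → ℝ) :
    ∫ u in 0..a, p u * (√(a ^ 2 - u ^ 2))⁻¹ = ∫ θ in 0..π / 2, p (a * sin θ) := by
  have hsubst := integral_deriv_smul_comp_of_deriv_nonneg (a := 0) (b := π / 2)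
    (f := fun θ => a * sin θ) (f' := fun θ => a * cos θ)
    (g := fun u => p u * (√(a ^ 2 - u ^ 2))⁻¹) (by fun_prop)
    (fun θ _ => (hasDerivAt_sin θ).const_mul a)
  simp only [min_eq_left pi_div_two_pos.le, max_eq_right pi_div_two_pos.le, sin_zero, mul_zero,
    sin_pi_div_two, mul_one, smul_eq_mul, Function.comp_apply] at hsubst
  rw [← hsubst fun θ hθ => mul_nonneg ha.le (cos_pos_of_mem_Ioo_zero hθ).le]
  refine integral_congr_Ioo_of_le pi_div_two_pos.le fun θ hθ => ?_
  simp only [mul_left_comm _ (p _), mul_cos_mul_inv_sqrt_sq_sub_sq ha hθ, mul_one]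

theorem intervalIntegrable_mul_inv_sqrt_sq_sub_sq (ha : 0 < a) (hp : Continuous p) :
    IntervalIntegrable (fun u => p u * (√(a ^ 2 - u ^ 2))⁻¹) volume 0 a := by
  have hsubst := integrable_deriv_smul_comp_iff_of_deriv_nonneg (a := 0) (b := π / 2)
    (f := fun θ => a * sin θ) (f' := fun θ => a * cos θ)
    (g := fun u => p u * (√(a ^ 2 - u ^ 2))⁻¹) (by fun_prop)
    (fun θ _ => (hasDerivAt_sin θ).const_mul a)
  simp only [min_eq_left pi_div_two_pos.le, max_eq_right pi_div_two_pos.le, sin_zero, mul_zero,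
    sin_pi_div_two, mul_one, smul_eq_mul, Function.comp_apply] at hsubst
  rw [← hsubst fun θ hθ => mul_nonneg ha.le (cos_pos_of_mem_Ioo_zero hθ).le]
  have hcont : Continuous fun θ => p (a * sin θ) := by fun_prop
  refine (hcont.intervalIntegrable 0 (π / 2)).congr_uIoo fun θ hθ => ?_
  rw [uIoo_of_le pi_div_two_pos.le] at hθ
  simp only [mul_left_comm _ (p _), mul_cos_mul_inv_sqrt_sq_sub_sq ha hθ, mul_one]

theorem integral_one_add_mul_mul_sin_sq (a c : ℝ) :
    ∫ θ in 0..π / 2, (1 + c * (a * sin θ) ^ 2) = π / 2 + π / 4 * c * a ^ 2 := by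
  simp_rw [mul_pow, ← mul_assoc]
  rw [integral_add intervalIntegrable_const (Continuous.intervalIntegrable (by fun_prop) _ _),
    intervalIntegral.integral_const, intervalIntegral.integral_const_mul, integral_sin_sq]
  simp only [sub_zero, smul_eq_mul, sin_zero, cos_pi_div_two]
  ring

end SineSubstitution

/-- `g` is a continuous coordinate on `[0, b]` fixing the origin, with derivative `g'` on `(0, b]`
bounded below by the (arbitrarily chosen) positive constant `1 / 2`. -/
structure IsCoordinateOn (g g' : ℝ → ℝ) (b : ℝ) : Prop where
  continuousOn : ContinuousOn g (Icc 0 b)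
  map_zero : g 0 = 0
  hasDerivAt : ∀ x ∈ Ioc 0 b, HasDerivAt g (g' x) x
  half_le_deriv : ∀ x ∈ Ioc 0 b, 1 / 2 ≤ g' x

namespace IsCoordinateOn

variable {g g' p : ℝ → ℝ} {b c ε : ℝ}

theorem map_pos (hg : IsCoordinateOn g g' b) (hb : 0 < b) : 0 < g b := by
  have hmono : StrictMonoOn g (Icc 0 b) := by
    refine strictMonoOn_of_hasDerivWithinAt_pos (f' := g') (convex_Icc 0 b) hg.continuousOn ?_ ?_
      <;> rw [interior_Icc]
    · exact fun x hx => (hg.hasDerivAt x (Ioo_subset_Ioc_self hx)).hasDerivWithinAt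
    · exact fun x hx => one_half_pos.trans_le (hg.half_le_deriv x (Ioo_subset_Ioc_self hx))
  simpa [hg.map_zero] using hmono (left_mem_Icc.2 hb.le) (right_mem_Icc.2 hb.le) hb

theorem integral_deriv_mul_comp (hg : IsCoordinateOn g g' b) (hb : 0 < b) (p : ℝ → ℝ) :
    ∫ x in 0..b, g' x * (p (g x) * (√(g b ^ 2 - g x ^ 2))⁻¹) =
      ∫ θ in 0..π / 2, p (g b * sin θ) := by
  have hsubst := integral_deriv_smul_comp_of_deriv_nonneg (a := 0) (b := b) (f := g) (f' := g')
    (g := fun u => p u * (√(g b ^ 2 - u ^ 2))⁻¹) (by rw [uIcc_of_le hb.le]; exact hg.continuousOn)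
  simp only [min_eq_left hb.le, max_eq_right hb.le, hg.map_zero, smul_eq_mul,
    Function.comp_apply] at hsubst
  rw [hsubst (fun x hx => hg.hasDerivAt x (Ioo_subset_Ioc_self hx))
    (fun x hx => one_half_pos.le.trans (hg.half_le_deriv x (Ioo_subset_Ioc_self hx)))]
  exact integral_mul_inv_sqrt_sq_sub_sq (hg.map_pos hb) p

theorem intervalIntegrable_deriv_mul_comp (hg : IsCoordinateOn g g' b) (hb : 0 < b)
    (hp : Continuous p) :
    IntervalIntegrable (fun x => g' x * (p (g x) * (√(g b ^ 2 - g x ^ 2))⁻¹)) volume 0 b := by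
  have hsubst := integrable_deriv_smul_comp_iff_of_deriv_nonneg (a := 0) (b := b) (f := g)
    (f' := g') (g := fun u => p u * (√(g b ^ 2 - u ^ 2))⁻¹)
    (by rw [uIcc_of_le hb.le]; exact hg.continuousOn)
  simp only [min_eq_left hb.le, max_eq_right hb.le, hg.map_zero, smul_eq_mul,
    Function.comp_apply] at hsubst
  rw [hsubst (fun x hx => hg.hasDerivAt x (Ioo_subset_Ioc_self hx))
    (fun x hx => one_half_pos.le.trans (hg.half_le_deriv x (Ioo_subset_Ioc_self hx)))]
  exact intervalIntegrable_mul_inv_sqrt_sq_sub_sq (hg.map_pos hb) hp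

theorem intervalIntegrable_inv_sqrt (hg : IsCoordinateOn g g' b) (hb : 0 < b) :
    IntervalIntegrable (fun x => (√(g b ^ 2 - g x ^ 2))⁻¹) volume 0 b := by
  have hdom := hg.intervalIntegrable_deriv_mul_comp hb (p := fun _ => 2) continuous_const
  refine hdom.mono_fun' ?_ ?_ <;> rw [uIoc_of_le hb.le]
  · have hmeas : AEMeasurable g (volume.restrict (Ioc 0 b)) :=
      (hg.continuousOn.mono Ioc_subset_Icc_self).aemeasurable measurableSet_Ioc
    exact ((hmeas.pow_const 2).const_sub _).sqrt.inv.aestronglyMeasurable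
  · filter_upwards [ae_restrict_mem measurableSet_Ioc] with x hx
    have hk : 0 ≤ (√(g b ^ 2 - g x ^ 2))⁻¹ := by positivity
    rw [norm_of_nonneg hk]
    nlinarith [hg.half_le_deriv x hx]

theorem abs_integral_inv_sqrt_sub_le (hg : IsCoordinateOn g g' b) (hb : 0 < b)
    (hε : ∀ x ∈ Ioc 0 b, |g' x * (1 + c * g x ^ 2) - 1| ≤ ε) :
    |(∫ x in 0..b, (√(g b ^ 2 - g x ^ 2))⁻¹) - (π / 2 + π / 4 * c * g b ^ 2)| ≤ π * ε := by
  set k : ℝ → ℝ := fun x => (√(g b ^ 2 - g x ^ 2))⁻¹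
  have hquad := hg.intervalIntegrable_deriv_mul_comp hb (p := fun u => 1 + c * u ^ 2)
    (by fun_prop)
  have hconst := hg.intervalIntegrable_deriv_mul_comp hb (p := fun _ => 2 * ε) continuous_const
  have hle : ∀ x ∈ Ioc 0 b, ‖k x - g' x * ((1 + c * g x ^ 2) * k x)‖ ≤ g' x * (2 * ε * k x) := by
    intro x hx
    have hk : 0 ≤ k x := by positivity
    calc ‖k x - g' x * ((1 + c * g x ^ 2) * k x)‖ = |g' x * (1 + c * g x ^ 2) - 1| * k x := by
          rw [norm_eq_abs, abs_sub_comm, ← abs_of_nonneg hk, ← abs_mul, abs_of_nonneg hk]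
          ring_nf
      _ ≤ 2 * g' x * ε * k x := by
          have hε' := hε x hx
          have hε0 : 0 ≤ ε := (abs_nonneg _).trans hε'
          have := hg.half_le_deriv x hx
          gcongr
          nlinarith
      _ = g' x * (2 * ε * k x) := by ring
  calc |(∫ x in 0..b, k x) - (π / 2 + π / 4 * c * g b ^ 2)|
      = ‖∫ x in 0..b, (k x - g' x * ((1 + c * g x ^ 2) * k x))‖ := by
        rw [integral_sub (hg.intervalIntegrable_inv_sqrt hb) hquad,
          hg.integral_deriv_mul_comp hb fun u => 1 + c * u ^ 2, integral_one_add_mul_mul_sin_sq,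
          norm_eq_abs]
    _ ≤ ∫ x in 0..b, g' x * (2 * ε * k x) :=
        norm_integral_le_of_norm_le hb.le (ae_of_all _ hle) hconst
    _ = π * ε := by
        rw [hg.integral_deriv_mul_comp hb fun _ => 2 * ε, intervalIntegral.integral_const,
          smul_eq_mul]
        ring

end IsCoordinateOn


variable {V : ℝ → ℝ} {l : ℝ}

/-- The coordinate `√(2V)` to the right of the minimum of the potential `V`, in which `V` becomes
the harmonic potential `u ↦ u²/2`. -/
noncomputable def harmonicCoordinate (V : ℝ → ℝ) (x : ℝ) : ℝ := √(2 * V x)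

/-- The time which a particle in the potential `V`, starting at rest from `b > 0`, takes to reach
the minimum `0` of `V` and come back. -/
noncomputable def halfPeriod (V : ℝ → ℝ) (b : ℝ) : ℝ := √2 * ∫ x in 0..b, (√(V b - V x))⁻¹

theorem inv_sqrt_sub_eq {b x : ℝ} (hb : 0 ≤ V b) (hx : 0 ≤ V x) :
    (√(V b - V x))⁻¹ = √2 * (√(harmonicCoordinate V b ^ 2 - harmonicCoordinate V x ^ 2))⁻¹ := by
  rw [harmonicCoordinate, harmonicCoordinate, sq_sqrt (by positivity), sq_sqrt (by positivity),
    ← mul_sub, sqrt_mul zero_le_two, mul_inv, mul_inv_cancel_left₀ (by positivity)]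

theorem intervalIntegrable_inv_sqrt_sub {g' : ℝ → ℝ} {b : ℝ} (hb : 0 < b)
    (hpos : ∀ x ∈ Ioc 0 b, 0 < V x) (hg : IsCoordinateOn (harmonicCoordinate V) g' b) :
    IntervalIntegrable (fun x => (√(V b - V x))⁻¹) volume 0 b := by
  refine ((hg.intervalIntegrable_inv_sqrt hb).const_mul √2).congr fun x hx => ?_
  rw [uIoc_of_le hb.le] at hx
  exact (inv_sqrt_sub_eq (hpos b (right_mem_Ioc.2 hb)).le (hpos x hx).le).symm

theorem halfPeriod_eq {b : ℝ} (hb : 0 < b) (hpos : ∀ x ∈ Ioc 0 b, 0 < V x) :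
    halfPeriod V b =
      2 * ∫ x in 0..b, (√(harmonicCoordinate V b ^ 2 - harmonicCoordinate V x ^ 2))⁻¹ := by
  have hcongr : ∀ x ∈ Ioo 0 b, (√(V b - V x))⁻¹ =
      √2 * (√(harmonicCoordinate V b ^ 2 - harmonicCoordinate V x ^ 2))⁻¹ := fun x hx =>
    inv_sqrt_sub_eq (hpos b (right_mem_Ioc.2 hb)).le (hpos x (Ioo_subset_Ioc_self hx)).le
  rw [halfPeriod, integral_congr_Ioo_of_le hb.le hcongr, intervalIntegral.integral_const_mul,
    ← mul_assoc, mul_self_sqrt zero_le_two]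

theorem halfPeriod_comp_neg (V : ℝ → ℝ) (b : ℝ) :
    halfPeriod (fun x => V (-x)) (-b) = √2 * ∫ x in b..0, (√(V b - V x))⁻¹ := by
  rw [halfPeriod, neg_neg, integral_comp_neg fun x => (√(V b - V x))⁻¹, neg_neg, neg_zero]

theorem halfPeriod_add_halfPeriod_comp_neg {m M : ℝ} (hmM : V m = V M)
    (hM : IntervalIntegrable (fun x => (√(V M - V x))⁻¹) volume 0 M)
    (hm : IntervalIntegrable (fun x => (√(V (- -m) - V (-x)))⁻¹) volume 0 (-m)) :
    halfPeriod V M + halfPeriod (fun x => V (-x)) (-m) =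
      √2 * ∫ x in m..M, (√(V M - V x))⁻¹ := by
  have hleft : IntervalIntegrable (fun x => (√(V M - V x))⁻¹) volume m 0 := by
    rw [IntervalIntegrable.iff_comp_neg, neg_zero]
    simpa only [neg_neg, hmM] using hm.symm
  rw [halfPeriod_comp_neg, hmM, halfPeriod, ← integral_add_adjacent_intervals hleft hM]
  ring

theorem hasDerivAt_sq_div_two_add_pow_four_div_four (l x : ℝ) :
    HasDerivAt (fun x => x ^ 2 / 2 + l * x ^ 4 / 4) (x + l * x ^ 3) x := by
  refine (((hasDerivAt_pow 2 x).div_const 2).add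
    (((hasDerivAt_pow 4 x).const_mul l).div_const 4)).congr_deriv ?_
  push_cast
  ring

/-- `V(x) = x²/2 + ℓx⁴/4 + O(x⁵)` near `0`, in a form which can be differentiated once: the
expansion is imposed on the derivative, and integrates to the one of `V`. -/
structure HasQuarticExpansion (V : ℝ → ℝ) (l : ℝ) : Prop where
  map_zero : V 0 = 0
  differentiableAt : ∀ᶠ x in 𝓝 0, DifferentiableAt ℝ V x
  deriv_isBigO : (fun x => deriv V x - (x + l * x ^ 3)) =O[𝓝 0] fun x => x ^ 4

namespace HasQuarticExpansion

theorem comp_neg (hV : HasQuarticExpansion V l) : HasQuarticExpansion (fun x => V (-x)) l := by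
  have hneg : Tendsto (fun x : ℝ => -x) (𝓝 0) (𝓝 0) := by
    simpa using (continuous_neg (G := ℝ)).tendsto 0
  refine ⟨by simp [hV.map_zero], ?_, ?_⟩
  · filter_upwards [hneg.eventually hV.differentiableAt] with x hx
    exact hx.comp x differentiableAt_id.neg
  · refine (hV.deriv_isBigO.comp_tendsto hneg).neg_left.congr (fun x => ?_) (fun x => ?_) <;>
      simp only [Function.comp_apply, deriv_comp_neg] <;> ring

theorem sub_isBigO (hV : HasQuarticExpansion V l) :
    (fun x => V x - (x ^ 2 / 2 + l * x ^ 4 / 4)) =O[𝓝 0] fun x => x ^ 5 := by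
  have hderiv : ∀ᶠ x in 𝓝 0, HasDerivAt (fun x => V x - (x ^ 2 / 2 + l * x ^ 4 / 4))
      (deriv V x - (x + l * x ^ 3)) x :=
    hV.differentiableAt.mono fun x hx =>
      hx.hasDerivAt.sub (hasDerivAt_sq_div_two_add_pow_four_div_four l x)
  have hbound : deriv (fun x => V x - (x ^ 2 / 2 + l * x ^ 4 / 4)) =O[𝓝 0]
      fun x => (x - 0) ^ 4 := by
    refine hV.deriv_isBigO.congr' (hderiv.mono fun x hx => hx.deriv.symm) ?_
    simp only [sub_zero, EventuallyEq.rfl]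
  simpa [hV.map_zero] using
    isBigO_pow_succ_of_deriv (hderiv.mono fun x hx => hx.differentiableAt) hbound

theorem two_mul_sub_sq_isBigO (hV : HasQuarticExpansion V l) :
    (fun x => 2 * V x - (x + l * x ^ 3 / 4) ^ 2) =O[𝓝 0] fun x => x ^ 5 := by
  have hpow : (fun x : ℝ => x ^ 6) =O[𝓝 0] fun x => x ^ 5 :=
    (isLittleO_pow_pow (by norm_num)).isBigO
  refine ((hV.sub_isBigO.const_mul_left 2).sub (hpow.const_mul_left (l ^ 2 / 16))).congr_left
    fun x => ?_
  ring

theorem harmonicCoordinate_isBigO (hV : HasQuarticExpansion V l) :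
    (fun x => harmonicCoordinate V x - (x + l * x ^ 3 / 4)) =O[𝓝[>] 0] fun x => x ^ 4 := by
  obtain ⟨C, hC, hbound⟩ := (hV.two_mul_sub_sq_isBigO.mono nhdsWithin_le_nhds).exists_pos
  have hfactor : ∀ᶠ x in 𝓝[>] (0 : ℝ), 1 / 2 < 1 + l * x ^ 2 / 4 := by
    have hcont : Continuous fun x : ℝ => 1 + l * x ^ 2 / 4 := by fun_prop
    exact nhdsWithin_le_nhds ((hcont.tendsto 0).eventually_const_lt (by norm_num))
  refine .of_bound (2 * C) ?_
  filter_upwards [hbound.bound, hfactor, self_mem_nhdsWithin] with x hx hxl (hx0 : 0 < x)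
  have hq : x / 2 ≤ x + l * x ^ 3 / 4 := by
    calc x / 2 = x * (1 / 2) := by ring
      _ ≤ x * (1 + l * x ^ 2 / 4) := by gcongr
      _ = x + l * x ^ 3 / 4 := by ring
  rw [norm_eq_abs, norm_of_nonneg (pow_nonneg hx0.le _)] at hx ⊢
  calc |harmonicCoordinate V x - (x + l * x ^ 3 / 4)|
      ≤ |2 * V x - (x + l * x ^ 3 / 4) ^ 2| / (x + l * x ^ 3 / 4) :=
        abs_sqrt_sub_le_div _ ((half_pos hx0).trans_le hq)
    _ ≤ C * x ^ 5 / (x / 2) := by gcongr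
    _ = 2 * C * x ^ 4 := by field_simp

theorem harmonicCoordinate_sub_isBigO (hV : HasQuarticExpansion V l) :
    (fun x => harmonicCoordinate V x - x) =O[𝓝[>] 0] fun x => x ^ 3 := by
  have hpow : (fun x : ℝ => x ^ 4) =O[𝓝[>] 0] fun x => x ^ 3 :=
    (isLittleO_pow_pow (by norm_num)).isBigO.mono nhdsWithin_le_nhds
  refine ((hV.harmonicCoordinate_isBigO.trans hpow).add
    ((isBigO_refl (fun x : ℝ => x ^ 3) _).const_mul_left (l / 4))).congr_left fun x => ?_
  ring

theorem harmonicCoordinate_isEquivalent (hV : HasQuarticExpansion V l) :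
    harmonicCoordinate V ~[𝓝[>] 0] fun x => x := by
  have hpow : (fun x : ℝ => x ^ 3) =o[𝓝[>] 0] fun x => x := by
    simpa using (isLittleO_pow_pow (𝕜 := ℝ) (m := 1) (n := 3) (by norm_num)).mono
      nhdsWithin_le_nhds
  exact hV.harmonicCoordinate_sub_isBigO.trans_isLittleO hpow

theorem deriv_isEquivalent (hV : HasQuarticExpansion V l) :
    deriv V ~[𝓝[>] 0] fun x => x := by
  have hpow (n : ℕ) (hn : 1 < n) : (fun x : ℝ => x ^ n) =o[𝓝 0] fun x => x := by
    simpa using isLittleO_pow_pow (𝕜 := ℝ) hn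
  refine IsLittleO.mono (((hV.deriv_isBigO.trans_isLittleO (hpow 4 (by norm_num))).add
    ((hpow 3 (by norm_num)).const_mul_left l)).congr_left fun x => ?_) nhdsWithin_le_nhds
  simp only [Pi.sub_apply]
  ring

theorem eventually_half_le_harmonicCoordinate (hV : HasQuarticExpansion V l) :
    ∀ᶠ x in 𝓝[>] 0, x / 2 ≤ harmonicCoordinate V x := by
  filter_upwards [hV.harmonicCoordinate_isEquivalent.bound one_half_pos, self_mem_nhdsWithin]
    with x hx (hx0 : 0 < x)
  simp only [Pi.sub_apply, norm_eq_abs, abs_of_pos hx0] at hx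
  linarith [neg_le_of_abs_le hx]

theorem eventually_half_le_deriv_div (hV : HasQuarticExpansion V l) :
    ∀ᶠ x in 𝓝[>] 0, 1 / 2 ≤ deriv V x / harmonicCoordinate V x := by
  have hdiv := hV.deriv_isEquivalent.div hV.harmonicCoordinate_isEquivalent
  have hone : Tendsto (fun x : ℝ => x / x) (𝓝[>] 0) (𝓝 1) :=
    tendsto_const_nhds.congr' (eventually_mem_nhdsWithin.mono fun x hx => (div_self hx.ne').symm)
  exact (hdiv.symm.tendsto_nhds hone).eventually_const_le one_half_lt_one

theorem deriv_mul_sub_harmonicCoordinate_isBigO (hV : HasQuarticExpansion V l) :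
    (fun x => deriv V x * (1 + -(3 / 4 * l) * harmonicCoordinate V x ^ 2) - harmonicCoordinate V x)
      =O[𝓝[>] 0] fun x => x ^ 4 := by
  have hg : harmonicCoordinate V =O[𝓝[>] 0] fun x => x := hV.harmonicCoordinate_isEquivalent.isBigO
  have hid : (fun x : ℝ => x) =O[𝓝[>] 0] fun x => x := isBigO_refl _ _
  have hone {n : ℕ} : (fun x : ℝ => x ^ n) =O[𝓝[>] 0] fun _ => (1 : ℝ) :=
    ((continuous_pow n).continuousAt.isBigO_one ℝ).mono nhdsWithin_le_nhds
  have hbdd : (fun x => 1 + -(3 / 4 * l) * harmonicCoordinate V x ^ 2) =O[𝓝[>] 0]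
      fun _ => (1 : ℝ) :=
    (isBigO_refl _ _).add (((hg.pow 2).trans hone).const_mul_left _)
  have hderiv := (hV.deriv_isBigO.mono nhdsWithin_le_nhds).mul hbdd
  have hcubic : (fun x => x + l * x ^ 3) =O[𝓝[>] 0] fun _ => (1 : ℝ) := by
    simpa using (hone (n := 1)).add ((hone (n := 3)).const_mul_left l)
  have hsq := hcubic.mul (hV.harmonicCoordinate_sub_isBigO.mul (hg.add hid))
  have hpow : (fun x : ℝ => x ^ 5) =O[𝓝[>] 0] fun x => x ^ 4 :=
    (isLittleO_pow_pow (by norm_num)).isBigO.mono nhdsWithin_le_nhds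
  simp only [mul_one, one_mul, ← pow_succ] at hderiv hsq
  -- With `g = x + ℓx³/4 + O(x⁴)` the cubic terms cancel: `V' - g = (3/4)ℓx³ + O(x⁴)`.
  refine (((hderiv.sub hV.harmonicCoordinate_isBigO).sub (hsq.const_mul_left (3 / 4 * l))).sub
    (hpow.const_mul_left (3 / 4 * l ^ 2))).congr_left fun x => ?_
  ring

theorem deriv_div_mul_sub_one_isBigO (hV : HasQuarticExpansion V l) :
    (fun x => deriv V x / harmonicCoordinate V x *
      (1 + -(3 / 4 * l) * harmonicCoordinate V x ^ 2) - 1) =O[𝓝[>] 0] fun x => x ^ 3 := by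
  have hinv := hV.harmonicCoordinate_isEquivalent.inv.isBigO
  refine (hV.deriv_mul_sub_harmonicCoordinate_isBigO.mul hinv).congr' ?_ ?_
  · filter_upwards [hV.eventually_half_le_harmonicCoordinate, self_mem_nhdsWithin]
      with x hx (hx0 : 0 < x)
    have hg : harmonicCoordinate V x ≠ 0 := ((half_pos hx0).trans_le hx).ne'
    simp only [Pi.inv_apply]
    field_simp
  · filter_upwards [self_mem_nhdsWithin] with x (hx0 : 0 < x)
    simp only [Pi.inv_apply]
    field_simp

theorem eventually_isCoordinateOn (hV : HasQuarticExpansion V l) :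
    ∀ᶠ b in 𝓝[>] 0, IsCoordinateOn (harmonicCoordinate V)
      (fun x => deriv V x / harmonicCoordinate V x) b := by
  have hzero : harmonicCoordinate V 0 = 0 := by simp [harmonicCoordinate, hV.map_zero]
  have hderiv : ∀ᶠ x in 𝓝[>] 0, HasDerivAt (harmonicCoordinate V)
      (deriv V x / harmonicCoordinate V x) x := by
    filter_upwards [hV.eventually_half_le_harmonicCoordinate, self_mem_nhdsWithin,
      hV.differentiableAt.filter_mono nhdsWithin_le_nhds] with x hx (hx0 : 0 < x) hdiff
    have hne : 2 * V x ≠ 0 := (sqrt_pos.1 ((half_pos hx0).trans_le hx)).ne'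
    exact ((hdiff.hasDerivAt.const_mul 2).sqrt hne).congr_deriv
      (mul_div_mul_left _ _ two_ne_zero)
  have hcont : ContinuousAt (harmonicCoordinate V) 0 :=
    (hV.differentiableAt.self_of_nhds.continuousAt.const_mul 2).sqrt
  filter_upwards [eventually_forall_Ioc_of_eventually_nhdsGT hderiv,
    eventually_forall_Ioc_of_eventually_nhdsGT hV.eventually_half_le_deriv_div] with b hb hhalf
  refine ⟨fun x hx => ?_, hzero, hb, hhalf⟩
  rcases hx.1.eq_or_lt with rfl | hx0
  · exact hcont.continuousWithinAt
  · exact (hb x ⟨hx0, hx.2⟩).continuousAt.continuousWithinAt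

theorem eventually_pos (hV : HasQuarticExpansion V l) : ∀ᶠ x in 𝓝[>] 0, 0 < V x := by
  filter_upwards [hV.eventually_half_le_harmonicCoordinate, self_mem_nhdsWithin]
    with x hx (hx0 : 0 < x)
  exact pos_of_mul_pos_right (sqrt_pos.1 ((half_pos hx0).trans_le hx)) zero_le_two

theorem eventually_intervalIntegrable (hV : HasQuarticExpansion V l) :
    ∀ᶠ b in 𝓝[>] 0, IntervalIntegrable (fun x => (√(V b - V x))⁻¹) volume 0 b := by
  filter_upwards [hV.eventually_isCoordinateOn, self_mem_nhdsWithin,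
    eventually_forall_Ioc_of_eventually_nhdsGT hV.eventually_pos] with b hg hb hpos
  exact intervalIntegrable_inv_sqrt_sub hb hpos hg

theorem halfPeriod_isBigO (hV : HasQuarticExpansion V l) :
    (fun b => halfPeriod V b - (π - 3 * π / 4 * l * V b)) =O[𝓝[>] 0] fun b => b ^ 3 := by
  obtain ⟨C, hC, hbound⟩ := hV.deriv_div_mul_sub_one_isBigO.exists_pos
  refine .of_bound (2 * π * C) ?_
  filter_upwards [hV.eventually_isCoordinateOn, self_mem_nhdsWithin,
    eventually_forall_Ioc_of_eventually_nhdsGT hbound.bound,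
    eventually_forall_Ioc_of_eventually_nhdsGT hV.eventually_pos] with b hg (hb : 0 < b) hle hpos
  have hε : ∀ x ∈ Ioc 0 b, |deriv V x / harmonicCoordinate V x *
      (1 + -(3 / 4 * l) * harmonicCoordinate V x ^ 2) - 1| ≤ C * b ^ 3 := fun x hx => by
    refine (hle x hx).trans ?_
    rw [norm_of_nonneg (pow_nonneg hx.1.le 3)]
    exact mul_le_mul_of_nonneg_left (pow_le_pow_left₀ hx.1.le hx.2 3) hC.le
  have hsq : harmonicCoordinate V b ^ 2 = 2 * V b :=
    sq_sqrt (mul_nonneg zero_le_two (hpos b (right_mem_Ioc.2 hb)).le)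
  calc ‖halfPeriod V b - (π - 3 * π / 4 * l * V b)‖
      = 2 * |(∫ x in 0..b, (√(harmonicCoordinate V b ^ 2 - harmonicCoordinate V x ^ 2))⁻¹) -
          (π / 2 + π / 4 * -(3 / 4 * l) * harmonicCoordinate V b ^ 2)| := by
        rw [halfPeriod_eq hb hpos, norm_eq_abs, ← abs_two, ← abs_mul, abs_two]
        congr 1
        linear_combination -(3 * π / 8 * l) * hsq
    _ ≤ 2 * (π * (C * b ^ 3)) := by gcongr; exact hg.abs_integral_inv_sqrt_sub_le hb hε
    _ = 2 * π * C * ‖b ^ 3‖ := by rw [norm_of_nonneg (pow_nonneg hb.le 3)]; ring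

section TurningPoint

variable {b : ℝ → ℝ}

theorem tendsto_nhdsGT_of_eq_sq_div_two (hV : HasQuarticExpansion V l)
    (hb : Tendsto b (𝓝[≠] 0) (𝓝 0)) (hVb : ∀ᶠ v in 𝓝[≠] 0, 0 ≤ b v ∧ V (b v) = v ^ 2 / 2) :
    Tendsto b (𝓝[≠] 0) (𝓝[>] 0) := by
  refine tendsto_nhdsWithin_iff.2 ⟨hb, ?_⟩
  filter_upwards [hVb, self_mem_nhdsWithin] with v ⟨hv, hVv⟩ (hv0 : v ≠ 0)
  refine hv.lt_of_ne fun h => ?_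
  rw [← h, hV.map_zero] at hVv
  exact hv0 (by simpa using hVv.symm)

theorem isBigO_of_eq_sq_div_two (hV : HasQuarticExpansion V l)
    (hb : Tendsto b (𝓝[≠] 0) (𝓝[>] 0)) (hVb : ∀ᶠ v in 𝓝[≠] 0, V (b v) = v ^ 2 / 2) :
    b =O[𝓝[≠] 0] fun v => v := by
  refine (hV.harmonicCoordinate_isEquivalent.symm.isBigO.comp_tendsto hb).trans
    (.of_bound 1 ?_)
  filter_upwards [hVb] with v hv
  simp [harmonicCoordinate, hv, mul_div_cancel₀, sqrt_sq_eq_abs]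

theorem halfPeriod_comp_isBigO (hV : HasQuarticExpansion V l)
    (hb : Tendsto b (𝓝[≠] 0) (𝓝[>] 0)) (hVb : ∀ᶠ v in 𝓝[≠] 0, V (b v) = v ^ 2 / 2) :
    (fun v => halfPeriod V (b v) - (π - 3 * π / 8 * l * v ^ 2)) =O[𝓝[≠] 0] fun v => v ^ 3 := by
  refine ((hV.halfPeriod_isBigO.comp_tendsto hb).trans
    ((hV.isBigO_of_eq_sq_div_two hb hVb).pow 3)).congr' ?_ .rfl
  filter_upwards [hVb] with v hv
  simp only [Function.comp_apply, hv]
  ring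

end TurningPoint

end HasQuarticExpansion

theorem statement15_general {xm xM T : ℝ → ℝ} (hV : HasQuarticExpansion V l)
    (hxm : Tendsto xm (𝓝[≠] 0) (𝓝 0)) (hxM : Tendsto xM (𝓝[≠] 0) (𝓝 0))
    (hext : ∀ᶠ v in 𝓝[≠] 0, xm v ≤ 0 ∧ 0 ≤ xM v ∧ V (xm v) = v ^ 2 / 2 ∧ V (xM v) = v ^ 2 / 2)
    (hT : ∀ᶠ v in 𝓝[≠] 0, T v = √2 * ∫ x in xm v..xM v, (√(v ^ 2 / 2 - V x))⁻¹) :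
    (fun v => T v - 2 * π + 3 * π / 4 * l * v ^ 2) =O[𝓝[≠] 0] fun v => v ^ 3 := by
  have hVM : ∀ᶠ v in 𝓝[≠] 0, V (xM v) = v ^ 2 / 2 := hext.mono fun v hv => hv.2.2.2
  have hVm : ∀ᶠ v in 𝓝[≠] 0, V (- -xm v) = v ^ 2 / 2 :=
    hext.mono fun v hv => by rw [neg_neg, hv.2.2.1]
  have htM : Tendsto xM (𝓝[≠] 0) (𝓝[>] 0) :=
    hV.tendsto_nhdsGT_of_eq_sq_div_two hxM (hext.mono fun v hv => ⟨hv.2.1, hv.2.2.2⟩)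
  have htm : Tendsto (fun v => -xm v) (𝓝[≠] 0) (𝓝[>] 0) :=
    hV.comp_neg.tendsto_nhdsGT_of_eq_sq_div_two (by simpa using hxm.neg)
      (hext.mp (hVm.mono fun v hVv hv => ⟨neg_nonneg.2 hv.1, hVv⟩))
  refine ((hV.halfPeriod_comp_isBigO htM hVM).add
    (hV.comp_neg.halfPeriod_comp_isBigO htm hVm)).congr' ?_ .rfl
  filter_upwards [hext, hT, htM.eventually hV.eventually_intervalIntegrable,
    htm.eventually hV.comp_neg.eventually_intervalIntegrable] with v ⟨_, _, hm, hM⟩ hTv hintM hintm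
  rw [hTv, ← hM, ← halfPeriod_add_halfPeriod_comp_neg (hm.trans hM.symm) hintM hintm]
  ring

theorem PerturbedQuartic.hasQuarticExpansion {f : ℝ → ℝ} (hV : PerturbedQuartic V f l) :
    HasQuarticExpansion V l := by
  obtain ⟨-, hf, hVf, hO⟩ := hV
  have hderiv (x : ℝ) : HasDerivAt V (x + l * x ^ 3 + deriv f x) x := by
    rw [funext hVf]
    exact (hasDerivAt_sq_div_two_add_pow_four_div_four l x).add
      (hf.differentiable (by norm_num) x).hasDerivAt
  refine ⟨?_, .of_forall fun x => (hderiv x).differentiableAt, ?_⟩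
  · have hf0 : f 0 = 0 := by simpa using (hO 0 (by norm_num)).eq_zero_imp.self_of_nhds
    simp [hVf, hf0]
  · refine (hO 1 (by norm_num)).congr (fun x => ?_) (fun x => ?_)
    · rw [iteratedDeriv_one, (hderiv x).deriv, add_sub_cancel_left]
    · exact (even_two.mul_left 2).pow_abs x

end

/-- the period map of a perturbed quartic potential satisfies
`|T(v) - 2π + (3π/4)ℓv²| ≤ C|v|³` for all small `v ≠ 0`. -/
theorem statement15 (V f : ℝ → ℝ) (l : ℝ) (hV : PerturbedQuartic V f l)
    (v₁ : ℝ) (hv₁ : 0 < v₁)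
    -- the extreme points `x^m(v) ≤ 0 ≤ x^M(v)`, determined near 0 by
    -- `V(x^m(v)) = V(x^M(v)) = v²/2`:
    (xm xM : ℝ → ℝ)
    (hext : ∀ v : ℝ, 0 < |v| → |v| < v₁ → xm v ≤ 0 ∧ 0 ≤ xM v ∧
      V (xm v) = v ^ 2 / 2 ∧ V (xM v) = v ^ 2 / 2)
    (hnear_m : Filter.Tendsto xm (𝓝 0) (𝓝 0))
    (hnear_M : Filter.Tendsto xM (𝓝 0) (𝓝 0))
    -- the period map `T(v) = √2 ∫_{x^m(v)}^{x^M(v)} (v²/2 - V(x))^{-1/2} dx`, `T(0) = 2π`: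
    (T : ℝ → ℝ) (hT0 : T 0 = 2 * Real.pi)
    (hT : ∀ v : ℝ, 0 < |v| → |v| < v₁ →
      T v = Real.sqrt 2 * ∫ x in (xm v)..(xM v), (Real.sqrt (v ^ 2 / 2 - V x))⁻¹) :
    ∃ v₀ > (0 : ℝ), ∃ C > (0 : ℝ), ∀ v : ℝ, 0 < |v| → |v| < v₀ →
      |T v - 2 * Real.pi + 3 * Real.pi / 4 * l * v ^ 2| ≤ C * |v| ^ 3 :=
  exists_forall_abs_le_of_isBigO_pow <| statement15_general hV.hasQuarticExpansion
    (hnear_m.mono_left nhdsWithin_le_nhds) (hnear_M.mono_left nhdsWithin_le_nhds)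
    (eventually_nhdsNE_zero_iff.2 ⟨v₁, hv₁, hext⟩) (eventually_nhdsNE_zero_iff.2 ⟨v₁, hv₁, hT⟩)
end

section
/- Let V be a C⁵ perturbed quartic potential with ℓ ∈ {−1,1} equal to the sign of V⁽⁴⁾(0), let T(v) be its period map, and let Γ_{n,t} = (8t/(3πn))^{1/2}. There exist K > 0 and C > 0 such that for every integer n ≥ 1, every t ∈ (0, Kn] and every v ∈ [−1,1]: |(n/2)·T(Γ_{n,t} v) − ℓt(1 − v²) − (nπ − ℓt)| ≤ C t^{3/2}/n^{1/2}. -/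
/-!
Write the potential as `V x = x ^ 2 * h x / 2` with `h` close to `1`. The energy coordinate
`s x = x * √(h x)` satisfies `s ^ 2 = 2 * V` and is differentiable across the minimum, so the period
is `T v = 2 * ∫ (√(v ^ 2 - s x ^ 2))⁻¹ dx` between the points where `s = -|v|` and `s = |v|`. Since
`1 = (1 - 3 * l / 4 * s ^ 2) * s' + O(s ^ 3 * s')`, the substitutions `y = s x` and
`y = |v| * sin θ` give `T v = 2 * ∫ (1 - 3 * l / 4 * v ^ 2 * sin θ ^ 2) dθ + O(v ^ 3)` over
`[-π / 2, π / 2]`, that is `T v = 2 * π - 3 * π / 4 * l * v ^ 2 + O(v ^ 3)`. The scaling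
`v ↦ √(8 * t / (3 * π * n)) * v` turns the quadratic term into `-(2 / n) * l * t * v ^ 2`.
-/

open Real Filter Asymptotics Topology

section
open MeasureTheory Set

lemma mul_inv_sqrt_sub_sq_comp_sin (k : ℝ → ℝ) {v θ : ℝ} (hv : 0 < v)
    (hθ : θ ∈ Ioo (-(π / 2)) (π / 2)) :
    k (v * sin θ) * (√(v ^ 2 - (v * sin θ) ^ 2))⁻¹ * (v * cos θ) = k (v * sin θ) := by
  have hcos : 0 < v * cos θ := mul_pos hv (cos_pos_of_mem_Ioo hθ)
  have hsqrt : √(v ^ 2 - (v * sin θ) ^ 2) = v * cos θ := by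
    rw [show v ^ 2 - (v * sin θ) ^ 2 = (v * cos θ) ^ 2 by rw [mul_pow, mul_pow, cos_sq']; ring,
      sqrt_sq hcos.le]
  rw [hsqrt, inv_mul_cancel_right₀ hcos.ne']

lemma integral_mul_inv_sqrt_sub_sq (k : ℝ → ℝ) {v : ℝ} (hv : 0 < v) :
    ∫ y in -v..v, k y * (√(v ^ 2 - y ^ 2))⁻¹ = ∫ θ in -(π / 2)..π / 2, k (v * sin θ) := by
  have hle : -(π / 2) ≤ π / 2 := by linarith [pi_pos]
  have hsub := intervalIntegral.integral_comp_mul_deriv_of_deriv_nonneg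
    (g := fun y => k y * (√(v ^ 2 - y ^ 2))⁻¹) (a := -(π / 2)) (b := π / 2)
    (continuous_sin.const_mul v).continuousOn (fun θ _ => (hasDerivAt_sin θ).const_mul v)
    fun θ hθ => by
      rw [min_eq_left hle, max_eq_right hle] at hθ
      exact (mul_pos hv (cos_pos_of_mem_Ioo hθ)).le
  simp only [sin_neg, sin_pi_div_two, mul_neg, mul_one] at hsub
  rw [← hsub]
  exact intervalIntegral.integral_congr_Ioo_of_le hle fun θ hθ =>
    mul_inv_sqrt_sub_sq_comp_sin k hv hθ

lemma intervalIntegrable_mul_inv_sqrt_sub_sq {k : ℝ → ℝ} (hk : Continuous k) {v : ℝ}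
    (hv : 0 < v) : IntervalIntegrable (fun y => k y * (√(v ^ 2 - y ^ 2))⁻¹) volume (-v) v := by
  have hle : -(π / 2) ≤ π / 2 := by linarith [pi_pos]
  have hsub := intervalIntegral.integrable_comp_mul_deriv_iff_of_deriv_nonneg
    (g := fun y => k y * (√(v ^ 2 - y ^ 2))⁻¹) (a := -(π / 2)) (b := π / 2)
    (continuous_sin.const_mul v).continuousOn (fun θ _ => (hasDerivAt_sin θ).const_mul v)
    fun θ hθ => by
      rw [min_eq_left hle, max_eq_right hle] at hθ
      exact (mul_pos hv (cos_pos_of_mem_Ioo hθ)).le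
  simp only [sin_neg, sin_pi_div_two, mul_neg, mul_one] at hsub
  rw [← hsub, intervalIntegrable_congr_uIoo (g := fun θ => k (v * sin θ))]
  · exact (hk.comp (continuous_sin.const_mul v)).intervalIntegrable _ _
  · rw [uIoo_of_le hle]
    exact fun θ hθ => mul_inv_sqrt_sub_sq_comp_sin k hv hθ

lemma norm_intervalIntegral_sub_le {E : Type*} [NormedAddCommGroup E] [NormedSpace ℝ E]
    {g p : ℝ → E} {w : ℝ → ℝ} {a b : ℝ} (hab : a ≤ b)
    (hg : AEStronglyMeasurable g (volume.restrict (uIoc a b)))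
    (hp : IntervalIntegrable p volume a b) (hw : IntervalIntegrable w volume a b)
    (hgp : ∀ x ∈ Ioo a b, ‖g x - p x‖ ≤ w x) :
    ‖(∫ x in a..b, g x) - ∫ x in a..b, p x‖ ≤ ∫ x in a..b, w x := by
  have hle : ∀ᵐ x ∂volume.restrict (Ioc a b), ‖g x - p x‖ ≤ w x := by
    rw [← restrict_Ioo_eq_restrict_Ioc]
    exact ae_restrict_of_forall_mem measurableSet_Ioo hgp
  have hg_sub : IntervalIntegrable (fun x => g x - p x) volume a b :=
    hw.mono_fun' (hg.sub hp.def'.aestronglyMeasurable) (by rwa [uIoc_of_le hab])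
  have hg_int : IntervalIntegrable g volume a b := by simpa using hg_sub.add hp
  rw [← intervalIntegral.integral_sub hg_int hp]
  exact intervalIntegral.norm_integral_le_of_norm_le hab
    ((ae_restrict_iff' measurableSet_Ioc).1 hle) hw

section Substitution

variable {s s' k : ℝ → ℝ} {a b v : ℝ}

lemma integral_comp_mul_inv_sqrt_sub_sq (hv : 0 < v) (hab : a ≤ b)
    (hs : ContinuousOn s (Icc a b)) (hs' : ∀ x ∈ Ioo a b, HasDerivAt s (s' x) x)
    (hs'_nonneg : ∀ x ∈ Ioo a b, 0 ≤ s' x) (ha : s a = -v) (hb : s b = v) :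
    ∫ x in a..b, k (s x) * (√(v ^ 2 - s x ^ 2))⁻¹ * s' x
      = ∫ θ in -(π / 2)..π / 2, k (v * sin θ) := by
  rw [← integral_mul_inv_sqrt_sub_sq k hv]
  have hsub := intervalIntegral.integral_comp_mul_deriv_of_deriv_nonneg (a := a) (b := b)
    (f := s) (f' := s') (g := fun y => k y * (√(v ^ 2 - y ^ 2))⁻¹) (by rwa [uIcc_of_le hab])
    (by rwa [min_eq_left hab, max_eq_right hab]) (by rwa [min_eq_left hab, max_eq_right hab])
  rwa [ha, hb] at hsub

lemma intervalIntegrable_comp_mul_inv_sqrt_sub_sq (hk : Continuous k) (hv : 0 < v) (hab : a ≤ b)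
    (hs : ContinuousOn s (Icc a b)) (hs' : ∀ x ∈ Ioo a b, HasDerivAt s (s' x) x)
    (hs'_nonneg : ∀ x ∈ Ioo a b, 0 ≤ s' x) (ha : s a = -v) (hb : s b = v) :
    IntervalIntegrable (fun x => k (s x) * (√(v ^ 2 - s x ^ 2))⁻¹ * s' x) volume a b := by
  refine (intervalIntegral.integrable_comp_mul_deriv_iff_of_deriv_nonneg (f := s)
    (g := fun y => k y * (√(v ^ 2 - y ^ 2))⁻¹) (by rwa [uIcc_of_le hab])
    (by rwa [min_eq_left hab, max_eq_right hab])
    (by rwa [min_eq_left hab, max_eq_right hab])).2 ?_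
  rw [ha, hb]
  exact intervalIntegrable_mul_inv_sqrt_sub_sq hk hv

lemma abs_le_of_hasDerivAt_nonneg (hab : a ≤ b) (hs : ContinuousOn s (Icc a b))
    (hs' : ∀ x ∈ Ioo a b, HasDerivAt s (s' x) x) (hs'_nonneg : ∀ x ∈ Ioo a b, 0 ≤ s' x)
    (ha : s a = -v) (hb : s b = v) {x : ℝ} (hx : x ∈ Icc a b) : |s x| ≤ v := by
  rw [← interior_Icc] at hs' hs'_nonneg
  have hmono : MonotoneOn s (Icc a b) := monotoneOn_of_hasDerivWithinAt_nonneg (convex_Icc _ _) hs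
    (fun x hx => (hs' x hx).hasDerivWithinAt) hs'_nonneg
  exact abs_le.2 ⟨ha ▸ hmono (left_mem_Icc.2 hab) hx hx.1, hb ▸ hmono hx (right_mem_Icc.2 hab) hx.2⟩

theorem abs_integral_inv_sqrt_sub_sq_sub_le {δ : ℝ} (hk : Continuous k) (hv : 0 < v)
    (hab : a ≤ b) (hs : ContinuousOn s (Icc a b)) (hs' : ∀ x ∈ Ioo a b, HasDerivAt s (s' x) x)
    (hs'_nonneg : ∀ x ∈ Ioo a b, 0 ≤ s' x) (ha : s a = -v) (hb : s b = v)
    (hδ : ∀ x ∈ Ioo a b, |1 - k (s x) * s' x| ≤ δ * s' x) :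
    |(∫ x in a..b, (√(v ^ 2 - s x ^ 2))⁻¹) - ∫ θ in -(π / 2)..π / 2, k (v * sin θ)|
      ≤ π * δ := by
  have hmeas : AEStronglyMeasurable (fun x => (√(v ^ 2 - s x ^ 2))⁻¹)
      (volume.restrict (uIoc a b)) := by
    have hs_meas : AEMeasurable s (volume.restrict (uIoc a b)) := by
      rw [uIoc_of_le hab]
      exact (hs.mono Ioc_subset_Icc_self).aemeasurable measurableSet_Ioc
    exact (((hs_meas.pow_const 2).const_sub (v ^ 2)).sqrt.inv).aestronglyMeasurable
  have hint {q : ℝ → ℝ} (hq : Continuous q) :=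
    intervalIntegrable_comp_mul_inv_sqrt_sub_sq hq hv hab hs hs' hs'_nonneg ha hb
  have heq {q : ℝ → ℝ} := integral_comp_mul_inv_sqrt_sub_sq (k := q) hv hab hs hs' hs'_nonneg ha hb
  calc _ ≤ ∫ x in a..b, δ * (√(v ^ 2 - s x ^ 2))⁻¹ * s' x := by
        rw [← heq]
        refine norm_intervalIntegral_sub_le hab hmeas (hint hk) (hint continuous_const)
          fun x hx => ?_
        have hR : 0 ≤ (√(v ^ 2 - s x ^ 2))⁻¹ := inv_nonneg.2 (sqrt_nonneg _)
        calc _ = (√(v ^ 2 - s x ^ 2))⁻¹ * |1 - k (s x) * s' x| := by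
              rw [norm_eq_abs, ← abs_of_nonneg hR, ← abs_mul, abs_of_nonneg hR]
              ring_nf
          _ ≤ (√(v ^ 2 - s x ^ 2))⁻¹ * (δ * s' x) := by gcongr; exact hδ x hx
          _ = δ * (√(v ^ 2 - s x ^ 2))⁻¹ * s' x := by ring
    _ = π * δ := by
        rw [heq (q := fun _ => δ), intervalIntegral.integral_const, smul_eq_mul]
        ring

lemma integral_one_add_mul_sq_mul_sin (c v : ℝ) :
    ∫ θ in -(π / 2)..π / 2, (1 + c * (v * sin θ) ^ 2) = π + c * π / 2 * v ^ 2 := by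
  have hint : IntervalIntegrable (fun θ => c * v ^ 2 * sin θ ^ 2) volume (-(π / 2)) (π / 2) :=
    ((continuous_sin.pow 2).const_mul _).intervalIntegrable _ _
  simp only [mul_pow, ← mul_assoc]
  rw [intervalIntegral.integral_add intervalIntegrable_const hint,
    intervalIntegral.integral_const_mul, integral_sin_sq, intervalIntegral.integral_const]
  simp only [cos_neg, cos_pi_div_two, smul_eq_mul]
  ring

end Substitution

end

theorem isBigO_integral_inv_sqrt_sub_sq {s s' α β : ℝ → ℝ} {c : ℝ}
    (hs' : ∀ᶠ x in 𝓝 0, HasDerivAt s (s' x) x) (hs'_nonneg : ∀ᶠ x in 𝓝 0, 0 ≤ s' x)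
    (hrem : (fun x => 1 - (1 + c * s x ^ 2) * s' x) =O[𝓝 0] fun x => s x ^ 3 * s' x)
    (hα : Tendsto α (𝓝[≠] 0) (𝓝 0)) (hβ : Tendsto β (𝓝[≠] 0) (𝓝 0))
    (hαβ : ∀ᶠ v in 𝓝[≠] 0, α v ≤ β v ∧ s (α v) = -|v| ∧ s (β v) = |v|) :
    (fun v => (∫ x in (α v)..(β v), (√(v ^ 2 - s x ^ 2))⁻¹) - (π + c * π / 2 * v ^ 2))
      =O[𝓝[≠] 0] fun v => v ^ 3 := by
  obtain ⟨E, hE0, hE⟩ := hrem.exists_nonneg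
  have hgood := (hα.Icc hβ).eventually
    ((hs'.and (hs'_nonneg.and hE.bound)).smallSets)
  refine IsBigO.of_bound (π * E) ?_
  filter_upwards [hαβ, hgood, self_mem_nhdsWithin] with v ⟨hle, hsα, hsβ⟩ hgood hv
  have hv : 0 < |v| := abs_pos.2 hv
  have hs : ContinuousOn s (Set.Icc (α v) (β v)) := fun x hx =>
    (hgood x hx).1.continuousAt.continuousWithinAt
  have hderiv : ∀ x ∈ Set.Ioo (α v) (β v), HasDerivAt s (s' x) x := fun x hx =>
    (hgood x (Set.Ioo_subset_Icc_self hx)).1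
  have hderiv_nonneg : ∀ x ∈ Set.Ioo (α v) (β v), 0 ≤ s' x := fun x hx =>
    (hgood x (Set.Ioo_subset_Icc_self hx)).2.1
  have hδ : ∀ x ∈ Set.Ioo (α v) (β v),
      |1 - (1 + c * s x ^ 2) * s' x| ≤ E * |v| ^ 3 * s' x := by
    intro x hx
    have hx := Set.Ioo_subset_Icc_self hx
    obtain ⟨-, hnonneg, hbound⟩ := hgood x hx
    simp only [norm_mul, norm_pow, norm_eq_abs, abs_of_nonneg hnonneg] at hbound
    calc _ ≤ E * (|s x| ^ 3 * s' x) := hbound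
      _ ≤ E * (|v| ^ 3 * s' x) := by
        gcongr ?_ * (?_ * _)
        exact pow_le_pow_left₀ (abs_nonneg _)
          (abs_le_of_hasDerivAt_nonneg hle hs hderiv hderiv_nonneg hsα hsβ hx) 3
      _ = E * |v| ^ 3 * s' x := by ring
  have hmain := abs_integral_inv_sqrt_sub_sq_sub_le (k := fun y => 1 + c * y ^ 2) (by fun_prop)
    hv hle hs hderiv hderiv_nonneg hsα hsβ hδ
  rw [integral_one_add_mul_sq_mul_sin, sq_abs] at hmain
  rwa [norm_eq_abs, norm_pow, norm_eq_abs, mul_assoc]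

lemma isBigO_pow_pow_nhds_zero {𝕜 : Type*} [NormedField 𝕜] {m n : ℕ} (hmn : n ≤ m) :
    (fun x : 𝕜 => x ^ m) =O[𝓝 0] fun x => x ^ n := by
  obtain rfl | hlt := hmn.eq_or_lt
  · exact isBigO_refl _ _
  · exact (isLittleO_pow_pow hlt).isBigO

lemma isBigO_sqrt_sub_sqrt {ι : Type*} {F : Filter ι} {f g : ι → ℝ} {a : ℝ} (ha : a ≠ 0)
    (hf : Tendsto f F (𝓝 a)) (hg : Tendsto g F (𝓝 a)) :
    (fun i => √(f i) - √(g i)) =O[F] fun i => f i - g i :=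
  (hasStrictDerivAt_sqrt ha).hasStrictFDerivAt.isBigO_sub.comp_tendsto (hf.prodMk_nhds hg)

lemma isBigO_div_pow {𝕜 : Type*} [NormedField 𝕜] {f : 𝕜 → 𝕜} {m n : ℕ}
    (hf : f =O[𝓝 0] fun x => x ^ (n + m)) :
    (fun x => f x / x ^ m) =O[𝓝 0] fun x => x ^ n := by
  obtain ⟨C, hC0, hC⟩ := hf.exists_nonneg
  refine IsBigO.of_bound C ?_
  filter_upwards [hC.bound] with x hx
  rw [norm_div]
  refine div_le_of_le_mul₀ (norm_nonneg _) (by positivity) ?_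
  rwa [mul_assoc, ← norm_mul, ← pow_add]

lemma isBigO_sub_const_of_isBigO_sub_quadratic {g : ℝ → ℝ} {a c : ℝ}
    (hg : (fun x => g x - (a + c * x ^ 2)) =O[𝓝 0] fun x => x ^ 3) :
    (fun x => g x - a) =O[𝓝 0] fun x => x := by
  refine ((hg.trans (isBigO_pow_pow_nhds_zero (show 1 ≤ 3 by norm_num))).add
    ((isBigO_pow_pow_nhds_zero one_le_two).const_mul_left c)).congr (fun x => ?_) pow_one
  ring

lemma tendsto_of_isBigO_sub_quadratic {g : ℝ → ℝ} {a c : ℝ}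
    (hg : (fun x => g x - (a + c * x ^ 2)) =O[𝓝 0] fun x => x ^ 3) : Tendsto g (𝓝 0) (𝓝 a) := by
  simpa using ((isBigO_sub_const_of_isBigO_sub_quadratic hg).trans_tendsto tendsto_id).add_const a

lemma tendsto_of_isBigO_sub_linear {g : ℝ → ℝ} {c : ℝ}
    (hg : (fun x => g x - c * x) =O[𝓝 0] fun x => x ^ 2) : Tendsto g (𝓝 0) (𝓝 0) := by
  have hpow : Tendsto (fun x : ℝ => x ^ 2) (𝓝 0) (𝓝 0) := by
    simpa using (continuous_pow 2).tendsto (0 : ℝ)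
  have hlin : Tendsto (fun x : ℝ => c * x) (𝓝 0) (𝓝 0) := by
    simpa using (continuous_const_mul c).tendsto 0
  simpa using (hg.trans_tendsto hpow).add hlin

section EnergyCoordinate

/-- The signed square root of `2 * V` for a potential of the form `V x = x ^ 2 * h x / 2`, used as a
coordinate near the minimum `0`. -/
noncomputable def energyCoordinate (h : ℝ → ℝ) (x : ℝ) : ℝ := x * √(h x)

variable {h : ℝ → ℝ} {l : ℝ}

lemma energyCoordinate_sq {x : ℝ} (hx : 0 ≤ h x) : energyCoordinate h x ^ 2 = x ^ 2 * h x := by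
  rw [energyCoordinate, mul_pow, sq_sqrt hx]

lemma hasDerivAt_energyCoordinate {h' x : ℝ} (hh' : HasDerivAt h h' x) (hx : 0 < h x) :
    HasDerivAt (energyCoordinate h) (√(h x) + x * (h' / (2 * √(h x)))) x := by
  simpa using! (hasDerivAt_id x).mul (hh'.sqrt hx.ne')

lemma isBigO_sqrt_sub_quadratic
    (hh : (fun x => h x - (1 + l / 2 * x ^ 2)) =O[𝓝 0] fun x => x ^ 3) :
    (fun x => √(h x) - (1 + l / 4 * x ^ 2)) =O[𝓝 0] fun x => x ^ 3 := by
  have hquad : Tendsto (fun x : ℝ => 1 + l / 4 * x ^ 2) (𝓝 0) (𝓝 1) := by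
    simpa using (show Continuous fun x : ℝ => 1 + l / 4 * x ^ 2 by fun_prop).tendsto 0
  have hsq : (fun x => h x - (1 + l / 4 * x ^ 2) ^ 2) =O[𝓝 0] fun x => x ^ 3 := by
    refine (hh.sub ((isBigO_pow_pow_nhds_zero (show 3 ≤ 4 by norm_num)).const_mul_left
      (l ^ 2 / 16))).congr_left fun x => ?_
    ring
  have hdiff := (isBigO_sqrt_sub_sqrt one_ne_zero (tendsto_of_isBigO_sub_quadratic hh)
    (by simpa using hquad.pow 2)).trans hsq
  refine hdiff.congr' ?_ EventuallyEq.rfl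
  filter_upwards [hquad.eventually (lt_mem_nhds one_pos)] with x hx
  rw [sqrt_sq hx.le]

lemma eventually_deriv_energyCoordinate (hlim : Tendsto h (𝓝 0) (𝓝 1))
    (hdiff : ∀ᶠ x in 𝓝 0, DifferentiableAt ℝ h x) :
    ∀ᶠ x in 𝓝 0, HasDerivAt (energyCoordinate h) (deriv (energyCoordinate h) x) x ∧
      deriv (energyCoordinate h) x = √(h x) + x * (deriv h x / (2 * √(h x))) := by
  filter_upwards [hdiff, hlim.eventually (lt_mem_nhds one_pos)] with x hx hpos
  have hderiv := hasDerivAt_energyCoordinate hx.hasDerivAt hpos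
  exact ⟨hderiv.differentiableAt.hasDerivAt, hderiv.deriv⟩

lemma tendsto_deriv_energyCoordinate (hlim : Tendsto h (𝓝 0) (𝓝 1))
    (hdiff : ∀ᶠ x in 𝓝 0, DifferentiableAt ℝ h x) (hlim' : Tendsto (deriv h) (𝓝 0) (𝓝 0)) :
    Tendsto (deriv (energyCoordinate h)) (𝓝 0) (𝓝 1) := by
  have hsqrt : Tendsto (fun x => √(h x)) (𝓝 0) (𝓝 1) := by simpa using hlim.sqrt
  have hformula : Tendsto (fun x => √(h x) + x * (deriv h x / (2 * √(h x)))) (𝓝 0) (𝓝 1) := by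
    simpa using hsqrt.add (tendsto_id.mul (hlim'.div (hsqrt.const_mul 2) (by norm_num)))
  refine hformula.congr' ?_
  filter_upwards [eventually_deriv_energyCoordinate hlim hdiff] with x hx using hx.2.symm

lemma isBigO_deriv_energyCoordinate_sub_quadratic
    (hh : (fun x => h x - (1 + l / 2 * x ^ 2)) =O[𝓝 0] fun x => x ^ 3)
    (hdiff : ∀ᶠ x in 𝓝 0, DifferentiableAt ℝ h x)
    (hh' : (fun x => deriv h x - l * x) =O[𝓝 0] fun x => x ^ 2) :
    (fun x => deriv (energyCoordinate h) x - (1 + 3 * l / 4 * x ^ 2)) =O[𝓝 0] fun x => x ^ 3 := by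
  have hlim := tendsto_of_isBigO_sub_quadratic hh
  have hsqrt_lim : Tendsto (fun x => √(h x)) (𝓝 0) (𝓝 1) := by simpa using hlim.sqrt
  have hinv : (fun x => (2 * √(h x))⁻¹) =O[𝓝 0] fun _ => (1 : ℝ) :=
    ((hsqrt_lim.const_mul 2).inv₀ (by norm_num)).isBigO_one ℝ
  have hsqrt_quad := isBigO_sqrt_sub_quadratic hh
  have hsqrt_sub_one := isBigO_sub_const_of_isBigO_sub_quadratic hsqrt_quad
  have hnum : (fun x => deriv h x - l * x - l * (x * (√(h x) - 1))) =O[𝓝 0] fun x => x ^ 2 :=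
    hh'.sub ((((isBigO_refl (fun x : ℝ => x) _).mul hsqrt_sub_one).congr_right
      fun x => by ring).const_mul_left l)
  have hcorr := ((isBigO_refl (fun x : ℝ => x) _).mul (hnum.mul hinv)).congr_right
    (g₂ := fun x => x ^ 3) fun x => by ring
  refine (hsqrt_quad.add hcorr).congr' ?_ EventuallyEq.rfl
  filter_upwards [eventually_deriv_energyCoordinate hlim hdiff,
    hsqrt_lim.eventually (lt_mem_nhds one_pos)] with x ⟨_, hx⟩ hpos
  rw [hx]
  field_simp
  ring

lemma isBigO_energyCoordinate_sq_sub_sq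
    (hh : (fun x => h x - (1 + l / 2 * x ^ 2)) =O[𝓝 0] fun x => x ^ 3) :
    (fun x => energyCoordinate h x ^ 2 - x ^ 2) =O[𝓝 0] fun x => x ^ 3 := by
  have hlim := tendsto_of_isBigO_sub_quadratic hh
  refine ((isBigO_refl (fun x : ℝ => x ^ 2) _).mul
    (isBigO_sub_const_of_isBigO_sub_quadratic hh)).congr' ?_ (.of_eq (by ext; ring))
  filter_upwards [hlim.eventually (lt_mem_nhds one_pos)] with x hx
  rw [energyCoordinate_sq hx.le]
  ring

lemma isBigO_one_sub_mul_deriv_energyCoordinate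
    (hh : (fun x => h x - (1 + l / 2 * x ^ 2)) =O[𝓝 0] fun x => x ^ 3)
    (hdiff : ∀ᶠ x in 𝓝 0, DifferentiableAt ℝ h x)
    (hh' : (fun x => deriv h x - l * x) =O[𝓝 0] fun x => x ^ 2) :
    (fun x => 1 - (1 + -(3 * l / 4) * energyCoordinate h x ^ 2) * deriv (energyCoordinate h) x)
      =O[𝓝 0] fun x => x ^ 3 := by
  have hderiv := isBigO_deriv_energyCoordinate_sub_quadratic hh hdiff hh'
  have hderiv_one := (tendsto_deriv_energyCoordinate (tendsto_of_isBigO_sub_quadratic hh) hdiff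
    (tendsto_of_isBigO_sub_linear hh')).isBigO_one ℝ
  have hsq_one : (fun x : ℝ => x ^ 2) =O[𝓝 0] fun _ => (1 : ℝ) := by
    simpa using isBigO_pow_pow_nhds_zero (𝕜 := ℝ) (Nat.zero_le 2)
  have hsq := (isBigO_energyCoordinate_sq_sub_sq hh).mul hderiv_one
  have hcross := hsq_one.mul hderiv
  simp only [mul_one, one_mul] at hsq hcross
  -- With `c = 3 * l / 4`, `D = s' - (1 + c * x ^ 2)` and `E = s ^ 2 - x ^ 2`, the left-hand side is
  -- `-D + c * (E * s') + (c * (x ^ 2 * D) + c ^ 2 * x ^ 4)`.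
  refine ((hderiv.neg_left.add (hsq.const_mul_left (3 * l / 4))).add
    ((hcross.const_mul_left (3 * l / 4)).add ((isBigO_pow_pow_nhds_zero
      (show 3 ≤ 4 by norm_num)).const_mul_left ((3 * l / 4) ^ 2)))).congr_left fun x => ?_
  ring

lemma isBigO_pow_three_energyCoordinate (hlim : Tendsto h (𝓝 0) (𝓝 1))
    (hdiff : ∀ᶠ x in 𝓝 0, DifferentiableAt ℝ h x) (hlim' : Tendsto (deriv h) (𝓝 0) (𝓝 0)) :
    (fun x => x ^ 3) =O[𝓝 0] fun x => energyCoordinate h x ^ 3 * deriv (energyCoordinate h) x := by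
  have one_isBigO {g : ℝ → ℝ} (hg : Tendsto g (𝓝 0) (𝓝 1)) : (fun _ => (1 : ℝ)) =O[𝓝 0] g :=
    ((isEquivalent_const_iff_tendsto one_ne_zero).2 hg).symm.isBigO
  have hid : (fun x => x) =O[𝓝 0] energyCoordinate h := by
    simpa [energyCoordinate] using! (isBigO_refl (fun x : ℝ => x) (𝓝 0)).mul
      (one_isBigO (g := fun x => √(h x)) (by simpa using hlim.sqrt))
  simpa using (hid.pow 3).mul (one_isBigO (tendsto_deriv_energyCoordinate hlim hdiff hlim'))

end EnergyCoordinate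

section QuarticFactor

/-- The factor `h` in the factorization `V x = x ^ 2 * h x / 2` of the potential
`V x = x ^ 2 / 2 + l * x ^ 4 / 4 + f x`. Since `f 0 / 0 = 0`, its value at `0` is `1`, which is the
continuous extension when `f` vanishes to third order. -/
noncomputable def quarticFactor (l : ℝ) (f : ℝ → ℝ) (x : ℝ) : ℝ :=
  1 + l / 2 * x ^ 2 + 2 * (f x / x ^ 2)

variable {f : ℝ → ℝ} {l : ℝ}

lemma sq_mul_quarticFactor_div_two (hf0 : f 0 = 0) (x : ℝ) :
    x ^ 2 * quarticFactor l f x / 2 = x ^ 2 / 2 + l * x ^ 4 / 4 + f x := by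
  rw [quarticFactor]
  obtain rfl | hx := eq_or_ne x 0
  · simp [hf0]
  · field_simp
    ring

lemma isBigO_quarticFactor_sub_quadratic (hf : f =O[𝓝 0] fun x => x ^ 5) :
    (fun x => quarticFactor l f x - (1 + l / 2 * x ^ 2)) =O[𝓝 0] fun x => x ^ 3 :=
  ((isBigO_div_pow (n := 3) (m := 2) hf).const_mul_left 2).congr_left fun x => by
    rw [quarticFactor]
    ring

lemma eventually_hasDerivAt_div_sq (hf : f =O[𝓝 0] fun x => x ^ 4)
    (hdiff : ∀ᶠ x in 𝓝 0, DifferentiableAt ℝ f x) :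
    ∀ᶠ x in 𝓝 0, HasDerivAt (fun x => f x / x ^ 2) (deriv f x / x ^ 2 - 2 * (f x / x ^ 3)) x := by
  filter_upwards [hdiff] with x hx
  obtain rfl | hx0 := eq_or_ne x 0
  · have hsq : (fun x => f x / x ^ 2) =O[𝓝 0] fun x : ℝ => ‖x - 0‖ ^ 2 := by
      simpa using isBigO_div_pow (n := 2) (m := 2) hf
    simpa using (hsq.hasFDerivAt (𝕜 := ℝ) one_lt_two).hasDerivAt
  · refine (hx.hasDerivAt.div (hasDerivAt_pow 2 x) (pow_ne_zero 2 hx0)).congr_deriv ?_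
    push_cast
    field_simp

lemma eventually_hasDerivAt_quarticFactor (hf : f =O[𝓝 0] fun x => x ^ 4)
    (hdiff : ∀ᶠ x in 𝓝 0, DifferentiableAt ℝ f x) :
    ∀ᶠ x in 𝓝 0, HasDerivAt (quarticFactor l f)
      (l * x + 2 * (deriv f x / x ^ 2 - 2 * (f x / x ^ 3))) x := by
  filter_upwards [eventually_hasDerivAt_div_sq hf hdiff] with x hx
  refine ((((hasDerivAt_pow 2 x).const_mul (l / 2)).const_add 1).add
    (hx.const_mul 2)).congr_deriv ?_
  push_cast
  ring

lemma isBigO_deriv_quarticFactor_sub_linear (hf : f =O[𝓝 0] fun x => x ^ 5)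
    (hf' : deriv f =O[𝓝 0] fun x => x ^ 4) (hdiff : ∀ᶠ x in 𝓝 0, DifferentiableAt ℝ f x) :
    (fun x => deriv (quarticFactor l f) x - l * x) =O[𝓝 0] fun x => x ^ 2 := by
  have hrem : (fun x => 2 * (deriv f x / x ^ 2 - 2 * (f x / x ^ 3))) =O[𝓝 0] fun x => x ^ 2 :=
    ((isBigO_div_pow (n := 2) (m := 2) hf').sub
      ((isBigO_div_pow (n := 2) (m := 3) hf).const_mul_left 2)).const_mul_left 2
  refine hrem.congr' ?_ EventuallyEq.rfl
  filter_upwards [eventually_hasDerivAt_quarticFactor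
    (hf.trans (isBigO_pow_pow_nhds_zero (by norm_num))) hdiff] with x hx
  rw [hx.deriv]
  ring

end QuarticFactor

section Period

variable {V h s xm xM T : ℝ → ℝ} {l : ℝ}

lemma sqrt_two_mul_integral_inv_sqrt_sub {a b v : ℝ}
    (hs : ∀ x ∈ Set.uIcc a b, s x ^ 2 = 2 * V x) :
    √2 * ∫ x in a..b, (√(v ^ 2 / 2 - V x))⁻¹ = 2 * ∫ x in a..b, (√(v ^ 2 - s x ^ 2))⁻¹ := by
  have hscale : ∀ x ∈ Set.uIcc a b,
      (√(v ^ 2 / 2 - V x))⁻¹ = √2 * (√(v ^ 2 - s x ^ 2))⁻¹ := fun x hx => by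
    rw [hs x hx, show v ^ 2 / 2 - V x = (v ^ 2 - 2 * V x) / 2 by ring,
      sqrt_div' _ zero_le_two, inv_div, div_eq_mul_inv]
  rw [intervalIntegral.integral_congr hscale, intervalIntegral.integral_const_mul, ← mul_assoc,
    mul_self_sqrt zero_le_two]

lemma energyCoordinate_eq_abs {v x : ℝ} (hx : 0 ≤ x) (hh : 0 ≤ h x)
    (hv : x ^ 2 * h x = v ^ 2) : energyCoordinate h x = |v| := by
  rw [← energyCoordinate_sq hh, sq_eq_sq_iff_abs_eq_abs] at hv
  have hnonneg : 0 ≤ energyCoordinate h x := mul_nonneg hx (sqrt_nonneg _)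
  rw [← hv, abs_of_nonneg hnonneg]

lemma energyCoordinate_eq_neg_abs {v x : ℝ} (hx : x ≤ 0) (hh : 0 ≤ h x)
    (hv : x ^ 2 * h x = v ^ 2) : energyCoordinate h x = -|v| := by
  rw [← energyCoordinate_sq hh, sq_eq_sq_iff_abs_eq_abs] at hv
  have hnonpos : energyCoordinate h x ≤ 0 := mul_nonpos_of_nonpos_of_nonneg hx (sqrt_nonneg _)
  rw [← hv, abs_of_nonpos hnonpos, neg_neg]

lemma isBigO_integral_energyCoordinate
    (hh : (fun x => h x - (1 + l / 2 * x ^ 2)) =O[𝓝 0] fun x => x ^ 3)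
    (hdiff : ∀ᶠ x in 𝓝 0, DifferentiableAt ℝ h x)
    (hh' : (fun x => deriv h x - l * x) =O[𝓝 0] fun x => x ^ 2)
    (hxm : Tendsto xm (𝓝[≠] 0) (𝓝 0)) (hxM : Tendsto xM (𝓝[≠] 0) (𝓝 0))
    (hext : ∀ᶠ v in 𝓝[≠] 0, xm v ≤ 0 ∧ 0 ≤ xM v ∧
      xm v ^ 2 * h (xm v) = v ^ 2 ∧ xM v ^ 2 * h (xM v) = v ^ 2) :
    (fun v => (∫ x in (xm v)..(xM v), (√(v ^ 2 - energyCoordinate h x ^ 2))⁻¹)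
      - (π + -(3 * l / 4) * π / 2 * v ^ 2)) =O[𝓝[≠] 0] fun v => v ^ 3 := by
  have hlim := tendsto_of_isBigO_sub_quadratic hh
  have hlim' := tendsto_of_isBigO_sub_linear hh'
  have hpos := hlim.eventually (lt_mem_nhds one_pos)
  refine isBigO_integral_inv_sqrt_sub_sq (s' := deriv (energyCoordinate h))
    ((eventually_deriv_energyCoordinate hlim hdiff).mono fun _ => And.left)
    ((tendsto_deriv_energyCoordinate hlim hdiff hlim').eventually (le_mem_nhds one_pos))
    ((isBigO_one_sub_mul_deriv_energyCoordinate hh hdiff hh').trans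
      (isBigO_pow_three_energyCoordinate hlim hdiff hlim')) hxm hxM ?_
  filter_upwards [hext, hxm.eventually hpos, hxM.eventually hpos]
    with v ⟨hm, hM, hVm, hVM⟩ hposm hposM
  exact ⟨hm.trans hM, energyCoordinate_eq_neg_abs hm hposm.le hVm,
    energyCoordinate_eq_abs hM hposM.le hVM⟩

theorem isBigO_period_sub
    (hV : ∀ᶠ x in 𝓝 0, V x = x ^ 2 * h x / 2)
    (hh : (fun x => h x - (1 + l / 2 * x ^ 2)) =O[𝓝 0] fun x => x ^ 3)
    (hdiff : ∀ᶠ x in 𝓝 0, DifferentiableAt ℝ h x)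
    (hh' : (fun x => deriv h x - l * x) =O[𝓝 0] fun x => x ^ 2)
    (hxm : Tendsto xm (𝓝[≠] 0) (𝓝 0)) (hxM : Tendsto xM (𝓝[≠] 0) (𝓝 0))
    (hext : ∀ᶠ v in 𝓝[≠] 0, xm v ≤ 0 ∧ 0 ≤ xM v ∧ V (xm v) = v ^ 2 / 2 ∧ V (xM v) = v ^ 2 / 2)
    (hT : ∀ᶠ v in 𝓝[≠] 0, T v = √2 * ∫ x in (xm v)..(xM v), (√(v ^ 2 / 2 - V x))⁻¹)
    (hT0 : T 0 = 2 * π) :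
    (fun v => T v - (2 * π - 3 * π / 4 * l * v ^ 2)) =O[𝓝 0] fun v => v ^ 3 := by
  have hsq : ∀ᶠ x in 𝓝 0, energyCoordinate h x ^ 2 = 2 * V x := by
    filter_upwards [hV, (tendsto_of_isBigO_sub_quadratic hh).eventually (le_mem_nhds one_pos)]
      with x hVx hx
    rw [energyCoordinate_sq hx, hVx]
    ring
  have hext' : ∀ᶠ v in 𝓝[≠] 0, xm v ≤ 0 ∧ 0 ≤ xM v ∧
      xm v ^ 2 * h (xm v) = v ^ 2 ∧ xM v ^ 2 * h (xM v) = v ^ 2 := by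
    filter_upwards [hext, hxm.eventually hV, hxM.eventually hV] with v ⟨hm, hM, hVm, hVM⟩ hm' hM'
    exact ⟨hm, hM, by linarith, by linarith⟩
  have hpunctured : (fun v => T v - (2 * π - 3 * π / 4 * l * v ^ 2)) =O[𝓝[≠] 0] fun v => v ^ 3 := by
    refine ((isBigO_integral_energyCoordinate hh hdiff hh' hxm hxM hext').const_mul_left 2).congr'
      ?_ EventuallyEq.rfl
    filter_upwards [hT, (hxm.uIcc hxM).eventually hsq.smallSets] with v hTv hsqv
    rw [hTv, sqrt_two_mul_integral_inv_sqrt_sub hsqv]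
    ring
  rw [← nhdsNE_sup_pure, isBigO_sup, isBigO_pure]
  exact ⟨hpunctured, fun _ => by simp [hT0]⟩

end Period

section Scaling

variable {l n t : ℝ}

lemma scaling_le_sqrt_div (hn : 0 ≤ n) (ht : 0 ≤ t) : √(8 * t / (3 * π * n)) ≤ √(t / n) := by
  rw [mul_div_mul_comm]
  refine sqrt_le_sqrt (mul_le_of_le_one_left (by positivity) ?_)
  rw [div_le_one (by positivity)]
  linarith [pi_gt_three]

lemma rpow_three_halves (ht : 0 ≤ t) : t ^ (3 / 2 : ℝ) = t * √t := by
  rw [show (3 : ℝ) / 2 = 1 + 1 / 2 by norm_num, rpow_add_of_nonneg ht zero_le_one (by norm_num),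
    rpow_one, sqrt_eq_rpow]

lemma mul_sqrt_div_pow_three (hn : 0 < n) (ht : 0 ≤ t) :
    n * √(t / n) ^ 3 = t ^ (3 / 2 : ℝ) / √n := by
  rw [rpow_three_halves ht, pow_succ, sq_sqrt (by positivity), sqrt_div ht]
  field_simp

theorem exists_abs_scaled_sub_le {T : ℝ → ℝ}
    (hT : (fun v => T v - (2 * π - 3 * π / 4 * l * v ^ 2)) =O[𝓝 0] fun v => v ^ 3) :
    ∃ K > 0, ∃ C > 0, ∀ n t : ℝ, 0 < t → t ≤ K * n → ∀ v ∈ Set.Icc (-1) 1,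
      |n / 2 * T (√(8 * t / (3 * π * n)) * v) - l * t * (1 - v ^ 2) - (n * π - l * t)|
        ≤ C * t ^ (3 / 2 : ℝ) / √n := by
  obtain ⟨C, hC, hbound⟩ := hT.exists_pos
  obtain ⟨ε, hε, hball⟩ := Metric.eventually_nhds_iff.1 hbound.bound
  simp only [dist_zero_right, norm_pow, norm_eq_abs] at hball
  refine ⟨(ε / 2) ^ 2, by positivity, C, hC, fun n t ht htn v hv => ?_⟩
  have hn : 0 < n := pos_of_mul_pos_right (ht.trans_le htn) (sq_nonneg _)
  set γ := √(8 * t / (3 * π * n))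
  have hγ : γ ^ 2 = 8 * t / (3 * π * n) := sq_sqrt (by positivity)
  have hγv : |γ * v| ≤ √(t / n) := by
    rw [abs_mul, abs_of_nonneg (sqrt_nonneg _)]
    exact (mul_le_of_le_one_right (sqrt_nonneg _) (abs_le.2 hv)).trans
      (scaling_le_sqrt_div hn.le ht.le)
  have hsmall : √(t / n) < ε :=
    (sqrt_le_iff.2 ⟨by positivity, (div_le_iff₀ hn).2 htn⟩).trans_lt (half_lt_self hε)
  calc _ = n / 2 * |T (γ * v) - (2 * π - 3 * π / 4 * l * (γ * v) ^ 2)| := by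
        rw [← abs_of_pos (half_pos hn), ← abs_mul, abs_of_pos (half_pos hn), mul_pow γ, hγ]
        congr 1
        field_simp
        ring
    _ ≤ n * (C * |γ * v| ^ 3) := by
        gcongr
        · linarith
        · exact hball (hγv.trans_lt hsmall)
    _ ≤ n * (C * √(t / n) ^ 3) := by gcongr
    _ = C * t ^ (3 / 2 : ℝ) / √n := by
        rw [mul_div_assoc, ← mul_sqrt_div_pow_three hn ht.le]
        ring

end Scaling

theorem statement17_general {V f xm xM T : ℝ → ℝ} {l : ℝ}
    (hV : ∀ᶠ x in 𝓝 0, V x = x ^ 2 / 2 + l * x ^ 4 / 4 + f x)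
    (hdiff : ∀ᶠ x in 𝓝 0, DifferentiableAt ℝ f x)
    (hf : f =O[𝓝 0] fun x => x ^ 5) (hf' : deriv f =O[𝓝 0] fun x => x ^ 4)
    (hxm : Tendsto xm (𝓝[≠] 0) (𝓝 0)) (hxM : Tendsto xM (𝓝[≠] 0) (𝓝 0))
    (hext : ∀ᶠ v in 𝓝[≠] 0, xm v ≤ 0 ∧ 0 ≤ xM v ∧ V (xm v) = v ^ 2 / 2 ∧ V (xM v) = v ^ 2 / 2)
    (hT : ∀ᶠ v in 𝓝[≠] 0, T v = √2 * ∫ x in (xm v)..(xM v), (√(v ^ 2 / 2 - V x))⁻¹)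
    (hT0 : T 0 = 2 * π) :
    ∃ K > 0, ∃ C > 0, ∀ n t : ℝ, 0 < t → t ≤ K * n → ∀ v ∈ Set.Icc (-1) 1,
      |n / 2 * T (√(8 * t / (3 * π * n)) * v) - l * t * (1 - v ^ 2) - (n * π - l * t)|
        ≤ C * t ^ (3 / 2 : ℝ) / √n := by
  have hf4 : f =O[𝓝 0] fun x => x ^ 4 := hf.trans (isBigO_pow_pow_nhds_zero (by norm_num))
  have hf0 : f 0 = 0 := by simpa using hf.eq_zero_imp.self_of_nhds
  have hfactor : ∀ᶠ x in 𝓝 0, V x = x ^ 2 * quarticFactor l f x / 2 := by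
    filter_upwards [hV] with x hx
    rw [hx, sq_mul_quarticFactor_div_two hf0]
  have hfactor_diff : ∀ᶠ x in 𝓝 0, DifferentiableAt ℝ (quarticFactor l f) x :=
    (eventually_hasDerivAt_quarticFactor hf4 hdiff).mono fun _ hx => hx.differentiableAt
  exact exists_abs_scaled_sub_le (isBigO_period_sub hfactor (isBigO_quarticFactor_sub_quadratic hf)
    hfactor_diff (isBigO_deriv_quarticFactor_sub_linear hf hf' hdiff) hxm hxM hext hT hT0)

lemma eventually_nhdsNE_zero_of_abs_lt {p : ℝ → Prop} {ε : ℝ} (hε : 0 < ε)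
    (hp : ∀ v, 0 < |v| → |v| < ε → p v) : ∀ᶠ v in 𝓝[≠] 0, p v := by
  filter_upwards [self_mem_nhdsWithin, nhdsWithin_le_nhds (Metric.ball_mem_nhds 0 hε)] with v hv hvε
  exact hp v (abs_pos.2 hv) (mem_ball_zero_iff.1 hvε)

namespace PerturbedQuartic

variable {V f : ℝ → ℝ} {l : ℝ}

lemma isBigO_pow_five (hV : PerturbedQuartic V f l) : f =O[𝓝 0] fun x => x ^ 5 := by
  simpa [← abs_pow] using! hV.2.2.2 0 (by norm_num)

lemma isBigO_deriv_pow_four (hV : PerturbedQuartic V f l) : deriv f =O[𝓝 0] fun x => x ^ 4 := by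
  simpa [iteratedDeriv_one, ← abs_pow] using! hV.2.2.2 1 (by norm_num)

lemma differentiable (hV : PerturbedQuartic V f l) : Differentiable ℝ f :=
  hV.2.1.differentiable (by norm_num)

end PerturbedQuartic

/-- with `Γ_{n,t} = (8t/(3πn))^{1/2}`, the period map of a
perturbed quartic potential satisfies
`|(n/2)T(Γ_{n,t}v) - ℓt(1-v²) - (nπ - ℓt)| ≤ C t^{3/2}/n^{1/2}`
for `n ≥ 1`, `t ∈ (0, Kn]`, `v ∈ [-1,1]`. -/
theorem statement17 (V f : ℝ → ℝ) (l : ℝ) (hV : PerturbedQuartic V f l)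
    (v₁ : ℝ) (hv₁ : 0 < v₁)
    -- the extreme points `x^m(v) ≤ 0 ≤ x^M(v)`, determined near 0 by
    -- `V(x^m(v)) = V(x^M(v)) = v²/2`:
    (xm xM : ℝ → ℝ)
    (hext : ∀ v : ℝ, 0 < |v| → |v| < v₁ → xm v ≤ 0 ∧ 0 ≤ xM v ∧
      V (xm v) = v ^ 2 / 2 ∧ V (xM v) = v ^ 2 / 2)
    (hnear_m : Filter.Tendsto xm (𝓝 0) (𝓝 0))
    (hnear_M : Filter.Tendsto xM (𝓝 0) (𝓝 0))
    -- the period map `T(v) = √2 ∫_{x^m(v)}^{x^M(v)} (v²/2 - V(x))^{-1/2} dx`, `T(0) = 2π`: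
    (T : ℝ → ℝ) (hT0 : T 0 = 2 * Real.pi)
    (hT : ∀ v : ℝ, 0 < |v| → |v| < v₁ →
      T v = Real.sqrt 2 * ∫ x in (xm v)..(xM v), (Real.sqrt (v ^ 2 / 2 - V x))⁻¹) :
    ∃ K > (0 : ℝ), ∃ C > (0 : ℝ),
      ∀ n : ℕ, 1 ≤ n → ∀ t : ℝ, 0 < t → t ≤ K * (n : ℝ) → ∀ v ∈ Set.Icc (-1 : ℝ) 1,
        |(n : ℝ) / 2 * T (Real.sqrt (8 * t / (3 * Real.pi * (n : ℝ))) * v)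
            - l * t * (1 - v ^ 2) - ((n : ℝ) * Real.pi - l * t)|
          ≤ C * t ^ ((3 : ℝ) / 2) / Real.sqrt (n : ℝ) := by
  obtain ⟨K, hK, C, hC, hbound⟩ := statement17_general (.of_forall hV.2.2.1)
    (.of_forall hV.differentiable) hV.isBigO_pow_five hV.isBigO_deriv_pow_four
    (hnear_m.mono_left nhdsWithin_le_nhds) (hnear_M.mono_left nhdsWithin_le_nhds)
    (eventually_nhdsNE_zero_of_abs_lt hv₁ hext) (eventually_nhdsNE_zero_of_abs_lt hv₁ hT) hT0
  exact ⟨K, hK, C, hC, fun n _ => hbound n⟩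
end
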